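/- Let D_σ and D_τ be finite field extensions of a finite field C inside a fixed algebraic closure, of degrees d_σ and d_τ, let D be the compositum (of degree lcm(d_σ,d_τ)) and D' = D_σ ∩ D_τ (of degree gcd(d_σ,d_τ)). Then D_σ and D_τ are linearly disjoint over D', D_σ ⊗_{D'} D_τ ≅ D, and D_σ ⊗_C D_τ is isomorphic as a C-algebra to the product of [D':C] copies of D. -/

import Mathlib

open scoped TensorProduct

open Module IntermediateField

set_option synthInstance.maxHeartbeats 1000000
set_option maxHeartbeats 1000000

theorem aux_gcd_dvd {C K : Type*} [Field C] [Finite C] [Field K] [Algebra C K]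
    (A B : IntermediateField C K) [FiniteDimensional C A] [FiniteDimensional C B] :
    finrank C ↥(A ⊓ B) = Nat.gcd (finrank C A) (finrank C B) := by
  have : Finite A := Module.finite_of_finite C
  have : Finite B := Module.finite_of_finite C
  apply Nat.dvd_antisymm
  · exact Nat.dvd_gcd (finrank_dvd_of_le_right inf_le_left) (finrank_dvd_of_le_right inf_le_right)
  obtain ⟨p, hp⟩ := CharP.exists C
  have : Fact p.Prime := ⟨CharP.char_is_prime C p⟩
  set g := Nat.gcd (finrank C A) (finrank C B) with hg
  have : NeZero g := ⟨(Nat.gcd_pos_of_pos_left _ finrank_pos).ne'⟩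
  let L := FiniteField.Extension C p g
  have hL : finrank C L = g := FiniteField.finrank_extension C p g
  obtain ⟨f⟩ := FiniteField.nonempty_algHom_of_finrank_dvd (F := C) (K := L) (L := A)
    (by rw [hL]; exact Nat.gcd_dvd_left _ _)
  obtain ⟨h⟩ := FiniteField.nonempty_algHom_of_finrank_dvd (F := C) (K := L) (L := B)
    (by rw [hL]; exact Nat.gcd_dvd_right _ _)
  let f' := A.val.comp f
  let h' := B.val.comp h
  let e : L ≃ₐ[C] f'.fieldRange := AlgEquiv.ofInjectiveField f'
  have : Normal C f'.fieldRange := Normal.of_algEquiv e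
  have key : h'.fieldRange = f'.fieldRange := by
    rw [← AlgHom.fieldRange_of_normal (h'.comp e.symm.toAlgHom)]
    ext x
    constructor
    · rintro ⟨y, rfl⟩
      exact ⟨e y, by simp⟩
    · rintro ⟨y, rfl⟩
      exact ⟨e.symm y, rfl⟩
  have hle : f'.fieldRange ≤ A ⊓ B := by
    apply le_inf
    · rintro _ ⟨y, rfl⟩
      exact (f y).2
    · rw [← key]
      rintro _ ⟨y, rfl⟩
      exact (h y).2
  have h1 := finrank_dvd_of_le_right hle
  rwa [← e.toLinearEquiv.finrank_eq, hL] at h1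

theorem aux_disj {C K : Type*} [Field C] [Finite C] [Field K] [Algebra C K]
    (A B : IntermediateField C K) [FiniteDimensional C A] [FiniteDimensional C B] :
    (extendScalars (inf_le_left : A ⊓ B ≤ A)).LinearDisjoint
      (extendScalars (inf_le_right : A ⊓ B ≤ B)) := by
  have : Finite A := Module.finite_of_finite C
  have : Finite B := Module.finite_of_finite C
  have : Finite (extendScalars (inf_le_left : A ⊓ B ≤ A)) := ‹Finite A›
  have : Finite (extendScalars (inf_le_right : A ⊓ B ≤ B)) := ‹Finite B›
  have : FiniteDimensional ↥(A ⊓ B) (extendScalars (inf_le_left : A ⊓ B ≤ A)) := .of_finite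
  have : FiniteDimensional ↥(A ⊓ B) (extendScalars (inf_le_right : A ⊓ B ≤ B)) := .of_finite
  apply LinearDisjoint.of_inf_eq_bot
  rw [extendScalars_inf]
  exact extendScalars_self _

theorem aux_mul {C K : Type*} [Field C] [Finite C] [Field K] [Algebra C K]
    (A B : IntermediateField C K) [FiniteDimensional C A] [FiniteDimensional C B] :
    finrank C ↥(A ⊓ B) * finrank C ↥(A ⊔ B) = finrank C A * finrank C B := by
  have h := (aux_disj A B).finrank_sup
  rw [extendScalars_sup] at h
  have hA : finrank C ↥(A ⊓ B) * finrank ↥(A ⊓ B) (extendScalars (inf_le_left : A ⊓ B ≤ A))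
    = finrank C A := finrank_mul_finrank C ↥(A ⊓ B) (extendScalars (inf_le_left : A ⊓ B ≤ A))
  have hB : finrank C ↥(A ⊓ B) * finrank ↥(A ⊓ B) (extendScalars (inf_le_right : A ⊓ B ≤ B))
    = finrank C B := finrank_mul_finrank C ↥(A ⊓ B) (extendScalars (inf_le_right : A ⊓ B ≤ B))
  have hD : finrank C ↥(A ⊓ B) * finrank ↥(A ⊓ B)
      (extendScalars (le_sup_of_le_left inf_le_left : A ⊓ B ≤ A ⊔ B))
    = finrank C ↥(A ⊔ B) := finrank_mul_finrank C ↥(A ⊓ B)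
      (extendScalars (le_sup_of_le_left inf_le_left : A ⊓ B ≤ A ⊔ B))
  rw [← hA, ← hB, ← hD, h]
  ring

theorem aux_tensor {F E : Type*} [Field F] [Field E] [Algebra F E]
    (A B : IntermediateField F E) [FiniteDimensional F A]
    (H : A.LinearDisjoint B) : Nonempty ((A ⊗[F] B) ≃ₐ[F] ↥(A ⊔ B)) :=
  ⟨(linearDisjoint_iff'.1 H).mulMap.trans
    (Subalgebra.equivOfEq _ _ (sup_toSubalgebra_of_left A B).symm)⟩

theorem aux_crt {R L ι : Type*} [CommRing R] [Field L] [Finite ι] (f : ι → R →+* L)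
    (hs : ∀ i, Function.Surjective (f i))
    (hne : ∀ i j, i ≠ j → ∃ t, f i t = 0 ∧ f j t ≠ 0) (y : ι → L) : ∃ r, ∀ i, f i r = y i := by
  have hmax (i) : (RingHom.ker (f i)).IsMaximal := RingHom.ker_isMaximal_of_surjective _ (hs _)
  have hco : Pairwise (Function.onFun IsCoprime fun i => RingHom.ker (f i)) := by
    intro i j hij
    rw [Function.onFun, Ideal.isCoprime_iff_sup_eq]
    apply (hmax i).coprime_of_ne (hmax j)
    intro h
    obtain ⟨t, h1, h2⟩ := hne i j hij
    have h3 : t ∈ RingHom.ker (f i) := h1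
    rw [h] at h3
    exact h2 h3
  choose x hx using fun i => hs i (y i)
  obtain ⟨r, hr⟩ := Ideal.pi_quotient_surjective hco (fun i => Ideal.Quotient.mk _ (x i))
  refine ⟨r, fun i => ?_⟩
  have h2 : r - x i ∈ RingHom.ker (f i) := Ideal.Quotient.eq.1 (hr i)
  rw [RingHom.mem_ker, map_sub, sub_eq_zero] at h2
  exact h2.trans (hx i)

theorem aux_pi {C K : Type*} [Field C] [Finite C] [Field K] [Algebra C K] [Normal C K]
    (A B : IntermediateField C K) [FiniteDimensional C A] [FiniteDimensional C B] :
    Nonempty ((A ⊗[C] B) ≃ₐ[C] (Fin (finrank C ↥(A ⊓ B)) → ↥(A ⊔ B))) := by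
  have : Finite A := Module.finite_of_finite C
  have : Finite B := Module.finite_of_finite C
  have : Finite ↥(A ⊓ B) := Module.finite_of_finite C
  let G := Gal(↥(A ⊓ B)/C)
  have hG : Nat.card G = finrank C ↥(A ⊓ B) := IsGalois.card_aut_eq_finrank _ _
  have : Finite G := inferInstance
  let e : Fin (finrank C ↥(A ⊓ B)) ≃ G := (finCongr hG.symm).trans (Finite.equivFin G).symm
  let φ (s : G) : A →ₐ[C] K := (s.liftNormal K).toAlgHom.comp A.val
  have hφ (s : G) (z : ↥(A ⊓ B)) : φ s ⟨z, z.2.1⟩ = s z := s.liftNormal_commutes K z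
  let ψ (s : G) : A ⊗[C] B →ₐ[C] K := Algebra.TensorProduct.productMap (φ s) B.val
  have hr (s : G) : (ψ s).range = (A ⊔ B).toSubalgebra := by
    rw [Algebra.TensorProduct.productMap_range, sup_toSubalgebra_of_left]
    congr 1
    · rw [← AlgHom.fieldRange_toSubalgebra, AlgHom.fieldRange_of_normal]
    · exact B.range_val
  let ψ' (s : G) : A ⊗[C] B →ₐ[C] ↥(A ⊔ B) := (ψ s).codRestrict (A ⊔ B).toSubalgebra
    (fun x => by rw [← hr s]; exact ⟨x, rfl⟩)
  have hψ' (s : G) (x) : ((ψ' s x : ↥(A ⊔ B)) : K) = ψ s x := rfl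
  have hs (s : G) : Function.Surjective (ψ' s) := by
    rintro ⟨x, hx⟩
    have : x ∈ (ψ s).range := by rw [hr s]; exact hx
    obtain ⟨y, hy⟩ := this
    exact ⟨y, Subtype.ext hy⟩
  let Ψ : A ⊗[C] B →ₐ[C] (Fin (finrank C ↥(A ⊓ B)) → ↥(A ⊔ B)) := AlgHom.pi fun i => ψ' (e i)
  have hsurj : Function.Surjective Ψ := by
    intro y
    have hne : ∀ i j, i ≠ j → ∃ t, ψ' (e i) t = 0 ∧ ψ' (e j) t ≠ 0 := by
      intro i j hij
      have hij' : e i ≠ e j := fun h => hij (e.injective h)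
      obtain ⟨z, hz⟩ : ∃ z, e i z ≠ e j z := by
        by_contra! h
        exact hij' (AlgEquiv.ext h)
      let t : A ⊗[C] B := (⟨z, z.2.1⟩ : A) ⊗ₜ 1 - 1 ⊗ₜ (⟨e i z, (e i z).2.2⟩ : B)
      have hv (s : G) : ψ s t = s z - e i z := by
        simp [t, ψ, hφ]
      have h0 : ψ' (e i) t = 0 := Subtype.ext ((hv (e i)).trans (sub_self _))
      refine ⟨t, h0, fun h => hz ?_⟩
      have h2 := (hv (e j)).symm.trans (congrArg Subtype.val h)
      exact Subtype.ext (sub_eq_zero.1 h2).symm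
    let f : Fin (finrank C ↥(A ⊓ B)) → (A ⊗[C] B →+* ↥(A ⊔ B)) := fun i => (ψ' (e i)).toRingHom
    obtain ⟨r, hr⟩ := @aux_crt (A ⊗[C] B) ↥(A ⊔ B) (Fin (finrank C ↥(A ⊓ B)))
      Algebra.TensorProduct.instCommRing inferInstance inferInstance f (fun i => hs (e i)) hne y
    exact ⟨r, funext hr⟩
  have hfr : finrank C (A ⊗[C] B) = finrank C (Fin (finrank C ↥(A ⊓ B)) → ↥(A ⊔ B)) := by
    rw [finrank_tensorProduct, finrank_pi_fintype]
    simp [aux_mul]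
  have hinj : Function.Injective Ψ :=
    (LinearMap.injective_iff_surjective_of_finrank_eq_finrank (f := Ψ.toLinearMap) hfr).2 hsurj
  exact ⟨AlgEquiv.ofBijective Ψ ⟨hinj, hsurj⟩⟩

/-- Let `D_σ` and `D_τ` be finite extensions of a finite field `C` inside a
fixed algebraic closure `K`, of degrees `d_σ` and `d_τ`, let `D = D_σ ⊔ D_τ` be
the compositum and `D' = D_σ ⊓ D_τ`.  Then:
(1) `[D : C] = lcm(d_σ, d_τ)` and `[D' : C] = gcd(d_σ, d_τ)`;
(2) `D_σ` and `D_τ` are linearly disjoint over `D'`;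
(3) `D_σ ⊗_{D'} D_τ ≅ D` as `D'`-algebras;
(4) `D_σ ⊗_C D_τ` is isomorphic as a `C`-algebra to the product of `[D' : C]`
    copies of `D`. -/
theorem finite_field_compositum_tensor
    (C K : Type*) [Field C] [Finite C] [Field K] [Algebra C K]
    [IsAlgClosure C K]
    (Dσ Dτ : IntermediateField C K)
    [FiniteDimensional C Dσ] [FiniteDimensional C Dτ] :
    (finrank C ↥(Dσ ⊔ Dτ) = Nat.lcm (finrank C Dσ) (finrank C Dτ)) ∧
    (finrank C ↥(Dσ ⊓ Dτ) = Nat.gcd (finrank C Dσ) (finrank C Dτ)) ∧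
    (extendScalars (inf_le_left : Dσ ⊓ Dτ ≤ Dσ)).LinearDisjoint
      (extendScalars (inf_le_right : Dσ ⊓ Dτ ≤ Dτ)) ∧
    Nonempty
      ((↥(extendScalars (inf_le_left : Dσ ⊓ Dτ ≤ Dσ)) ⊗[↥(Dσ ⊓ Dτ)]
          ↥(extendScalars (inf_le_right : Dσ ⊓ Dτ ≤ Dτ))) ≃ₐ[↥(Dσ ⊓ Dτ)]
        ↥(extendScalars (le_trans inf_le_left le_sup_left : Dσ ⊓ Dτ ≤ Dσ ⊔ Dτ))) ∧
    Nonempty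
      ((↥Dσ ⊗[C] ↥Dτ) ≃ₐ[C]
        (Fin (finrank C ↥(Dσ ⊓ Dτ)) → ↥(Dσ ⊔ Dτ))) := by
  have hg := aux_gcd_dvd Dσ Dτ
  have : Normal C K := IsAlgClosure.normal C K
  refine ⟨?_, hg, aux_disj Dσ Dτ, ?_, aux_pi Dσ Dτ⟩
  · have h := aux_mul Dσ Dτ
    rw [← Nat.gcd_mul_lcm (finrank C Dσ), hg] at h
    exact Nat.eq_of_mul_eq_mul_left (Nat.gcd_pos_of_pos_left _ finrank_pos) h
  · have : Finite Dσ := Module.finite_of_finite C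
    have : Finite (extendScalars (inf_le_left : Dσ ⊓ Dτ ≤ Dσ)) := ‹Finite Dσ›
    have : FiniteDimensional ↥(Dσ ⊓ Dτ) (extendScalars (inf_le_left : Dσ ⊓ Dτ ≤ Dσ)) := .of_finite
    have h := aux_tensor _ _ (aux_disj Dσ Dτ)
    rw [extendScalars_sup] at h
    exact h
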